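/- Bound on bisimulation distance with encoder error: let f̂ : S → S and bounded r̂ : S → ℝ be approximate dynamics with bisimulation metric d̂(s,t) := c_R · ∑_{n=0}^∞ c_T^n · |r̂(f̂^n(s)) − r̂(f̂^n(t))|, and let φ : S → E be an encoder into a normed space E, with encoded distance d̂_φ(s,t) := ‖φ(s) − φ(t)‖. Suppose ε_φ, ε_r, ε_P ≥ 0 satisfy |d̂_φ(s,t) − d̂(s,t)| ≤ ε_φ for all s,t ∈ S, |r̂(s) − r(s)| ≤ ε_r for all s ∈ S, and d(f(s), f̂(s)) ≤ ε_P for all s ∈ S. Then for all s, t ∈ S, |d(s,t) − d̂_φ(s,t)| ≤ ε_φ + (2·c_R·ε_r)/(1 − c_T) + (2·c_T·ε_P)/(1 − c_T). -/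

import Mathlib

/-- The deterministic on-policy bisimulation metric. -/
noncomputable def bisimD {S : Type*} (f : S → S) (r : S → ℝ) (cR cT : ℝ)
    (s t : S) : ℝ :=
  cR * ∑' n : ℕ, cT ^ n * |r (f^[n] s) - r (f^[n] t)|

/-!
Write `d(s, t)` as a weighted `ℓ¹` distance between the reward sequences `r (f^n s)` and
`r (f^n t)`. By the quadrilateral inequality, `|d(s, t) - d̂(s, t)|` is at most the sum over
`x ∈ {s, t}` of the distance between the true and the approximate reward sequence of `x`. If `B`
bounds this distance, then splitting off the first reward and passing through the true reward
sequence of `f̂ x` shows that `c_R ε_r + c_T (ε_P + B)` bounds it too; the fixed point is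
`B = (c_R ε_r + c_T ε_P) / (1 - c_T)`, and by induction it bounds every partial sum.
-/

section WeightedDist

variable {X : Type*} [PseudoMetricSpace X]

/-- The weighted `ℓ¹` distance between two sequences. It is `0` when the series diverges. The
bisimulation metric is the case of reward sequences with weights `c_R * c_T ^ n`. -/
noncomputable def weightedDist (w : ℕ → ℝ) (u v : ℕ → X) : ℝ :=
  ∑' n, w n * dist (u n) (v n)

theorem weightedDist_nonneg {w : ℕ → ℝ} (hw : ∀ n, 0 ≤ w n) (u v : ℕ → X) :
    0 ≤ weightedDist w u v :=
  tsum_nonneg fun n ↦ mul_nonneg (hw n) dist_nonneg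

theorem abs_weightedDist_sub_weightedDist_le {w : ℕ → ℝ} (hw : ∀ n, 0 ≤ w n)
    {u v u' v' : ℕ → X} (huv : Summable fun n ↦ w n * dist (u n) (v n))
    (huu' : Summable fun n ↦ w n * dist (u n) (u' n))
    (hvv' : Summable fun n ↦ w n * dist (v n) (v' n)) :
    |weightedDist w u v - weightedDist w u' v'| ≤ weightedDist w u u' + weightedDist w v v' := by
  have hterm : ∀ n, ‖w n * dist (u n) (v n) - w n * dist (u' n) (v' n)‖ ≤
      w n * dist (u n) (u' n) + w n * dist (v n) (v' n) := fun n ↦ by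
    rw [← mul_sub, ← mul_add, norm_mul, Real.norm_of_nonneg (hw n), ← dist_eq_norm]
    exact mul_le_mul_of_nonneg_left (dist_dist_dist_le _ _ _ _) (hw n)
  have hbound := huu'.add hvv'
  have hu'v' : Summable fun n ↦ w n * dist (u' n) (v' n) := by
    simpa only [sub_sub_cancel] using huv.sub (hbound.of_norm_bounded hterm)
  unfold weightedDist
  rw [← huv.tsum_sub hu'v', ← huu'.tsum_add hvv']
  exact tsum_of_norm_bounded hbound.hasSum hterm

end WeightedDist

section RewardSeq

open Finset

variable {S X : Type*}

/-- The sequence of rewards collected along the trajectory of `s` under the dynamics `f`. -/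
def rewardSeq (f : S → S) (r : S → X) (s : S) (n : ℕ) : X :=
  r (f^[n] s)

variable [PseudoMetricSpace X] {f fhat : S → S} {r rhat : S → X} {cR cT εr εP : ℝ}

theorem sum_range_succ_dist_rewardSeq (f fhat : S → S) (r rhat : S → X) (cR cT : ℝ) (s : S)
    (N : ℕ) :
    ∑ n ∈ range (N + 1), cR * cT ^ n * dist (rewardSeq f r s n) (rewardSeq fhat rhat s n) =
      cR * dist (r s) (rhat s) + cT * ∑ n ∈ range N,
        cR * cT ^ n * dist (rewardSeq f r (f s) n) (rewardSeq fhat rhat (fhat s) n) := by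
  rw [sum_range_succ', mul_sum, add_comm]
  simp only [rewardSeq, Function.iterate_succ_apply, Function.iterate_zero_apply, pow_zero,
    mul_one, pow_succ']
  congr 1
  exact sum_congr rfl fun n _ ↦ by ring

theorem sum_range_dist_rewardSeq_le (hcR : 0 ≤ cR) (hcT0 : 0 ≤ cT) (hcT1 : cT < 1)
    (hsum : ∀ s, Summable fun n ↦
      cR * cT ^ n * dist (rewardSeq f r (f s) n) (rewardSeq f r (fhat s) n))
    (hr : ∀ s, dist (r s) (rhat s) ≤ εr)
    (hP : ∀ s, weightedDist (fun n ↦ cR * cT ^ n)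
      (rewardSeq f r (f s)) (rewardSeq f r (fhat s)) ≤ εP) (s : S) (N : ℕ) :
    ∑ n ∈ range N, cR * cT ^ n * dist (rewardSeq f r s n) (rewardSeq fhat rhat s n) ≤
      (cR * εr + cT * εP) / (1 - cT) := by
  have hpos : 0 < 1 - cT := sub_pos.mpr hcT1
  have hw : ∀ n, 0 ≤ cR * cT ^ n := fun n ↦ by positivity
  induction N generalizing s with
  | zero =>
    have hεr : 0 ≤ εr := dist_nonneg.trans (hr s)
    have hεP : 0 ≤ εP := (weightedDist_nonneg hw _ _).trans (hP s)
    rw [sum_range_zero]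
    positivity
  | succ N ih =>
    have htriangle :
        ∑ n ∈ range N,
            cR * cT ^ n * dist (rewardSeq f r (f s) n) (rewardSeq fhat rhat (fhat s) n) ≤
          ∑ n ∈ range N, cR * cT ^ n * dist (rewardSeq f r (f s) n) (rewardSeq f r (fhat s) n) +
          ∑ n ∈ range N,
            cR * cT ^ n * dist (rewardSeq f r (fhat s) n) (rewardSeq fhat rhat (fhat s) n) := by
      rw [← sum_add_distrib]
      refine sum_le_sum fun n _ ↦ ?_
      rw [← mul_add]
      exact mul_le_mul_of_nonneg_left (dist_triangle _ _ _) (hw n)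
    have htransition :
        ∑ n ∈ range N, cR * cT ^ n * dist (rewardSeq f r (f s) n) (rewardSeq f r (fhat s) n) ≤
          εP :=
      ((hsum s).sum_le_tsum _ fun n _ ↦ mul_nonneg (hw n) dist_nonneg).trans (hP s)
    calc
      _ = cR * dist (r s) (rhat s) + cT * ∑ n ∈ range N,
            cR * cT ^ n * dist (rewardSeq f r (f s) n) (rewardSeq fhat rhat (fhat s) n) :=
        sum_range_succ_dist_rewardSeq f fhat r rhat cR cT s N
      _ ≤ cR * εr + cT * (εP + (cR * εr + cT * εP) / (1 - cT)) := by
        gcongr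
        · exact hr s
        · exact htriangle.trans (add_le_add htransition (ih (fhat s)))
      _ = (cR * εr + cT * εP) / (1 - cT) := by
        field_simp
        ring

end RewardSeq

section BisimD

variable {S : Type*} {f fhat : S → S} {r rhat : S → ℝ} {cR cT εφ εr εP : ℝ}

theorem bisimD_eq_weightedDist (f : S → S) (r : S → ℝ) (cR cT : ℝ) (s t : S) :
    bisimD f r cR cT s t =
      weightedDist (fun n ↦ cR * cT ^ n) (rewardSeq f r s) (rewardSeq f r t) := by
  simp only [bisimD, weightedDist, rewardSeq, Real.dist_eq, mul_assoc, tsum_mul_left]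

theorem abs_bisimD_sub_bisimD_le (hcR : 0 ≤ cR) (hcT0 : 0 ≤ cT) (hcT1 : cT < 1)
    (hsum : ∀ s t, Summable fun n : ℕ ↦ cT ^ n * |r (f^[n] s) - r (f^[n] t)|)
    (hr : ∀ s, |rhat s - r s| ≤ εr) (hP : ∀ s, bisimD f r cR cT (f s) (fhat s) ≤ εP) (s t : S) :
    |bisimD f r cR cT s t - bisimD fhat rhat cR cT s t| ≤
      2 * cR * εr / (1 - cT) + 2 * cT * εP / (1 - cT) := by
  have hw : ∀ n, 0 ≤ cR * cT ^ n := fun n ↦ by positivity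
  have hsum_dist : ∀ s t, Summable fun n ↦
      cR * cT ^ n * dist (rewardSeq f r s n) (rewardSeq f r t n) := fun s t ↦ by
    simpa only [rewardSeq, Real.dist_eq, mul_assoc] using (hsum s t).mul_left cR
  have hr_dist : ∀ s, dist (r s) (rhat s) ≤ εr := fun s ↦
    (dist_comm _ _).trans_le (hr s)
  simp only [bisimD_eq_weightedDist] at hP ⊢
  have hpartial := sum_range_dist_rewardSeq_le hcR hcT0 hcT1
    (fun s ↦ hsum_dist (f s) (fhat s)) hr_dist hP
  have hterm : ∀ s n, 0 ≤ cR * cT ^ n * dist (rewardSeq f r s n) (rewardSeq fhat rhat s n) :=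
    fun s n ↦ mul_nonneg (hw n) dist_nonneg
  have hmodel_sum : ∀ s, Summable fun n ↦
      cR * cT ^ n * dist (rewardSeq f r s n) (rewardSeq fhat rhat s n) :=
    fun s ↦ summable_of_sum_range_le (hterm s) (hpartial s)
  have hmodel_le : ∀ s, weightedDist (fun n ↦ cR * cT ^ n) (rewardSeq f r s)
      (rewardSeq fhat rhat s) ≤ (cR * εr + cT * εP) / (1 - cT) :=
    fun s ↦ Real.tsum_le_of_sum_range_le (hterm s) (hpartial s)
  calc
    _ ≤ weightedDist (fun n ↦ cR * cT ^ n) (rewardSeq f r s) (rewardSeq fhat rhat s) +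
          weightedDist (fun n ↦ cR * cT ^ n) (rewardSeq f r t) (rewardSeq fhat rhat t) :=
      abs_weightedDist_sub_weightedDist_le hw (hsum_dist s t) (hmodel_sum s) (hmodel_sum t)
    _ ≤ (cR * εr + cT * εP) / (1 - cT) + (cR * εr + cT * εP) / (1 - cT) :=
      add_le_add (hmodel_le s) (hmodel_le t)
    _ = 2 * cR * εr / (1 - cT) + 2 * cT * εP / (1 - cT) := by ring

theorem summable_pow_mul_abs_sub_of_bounded (hcT0 : 0 ≤ cT) (hcT1 : cT < 1)
    (hr : ∃ M, ∀ s, |r s| ≤ M) (x y : ℕ → S) :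
    Summable fun n ↦ cT ^ n * |r (x n) - r (y n)| := by
  obtain ⟨M, hM⟩ := hr
  have hsub : ∀ n, |r (x n) - r (y n)| ≤ M + M := fun n ↦
    (abs_sub _ _).trans (add_le_add (hM (x n)) (hM (y n)))
  exact ((summable_geometric_of_lt_one hcT0 hcT1).mul_right (M + M)).of_nonneg_of_le
    (fun n ↦ by positivity) fun n ↦ mul_le_mul_of_nonneg_left (hsub n) (pow_nonneg hcT0 n)

theorem bisim_distance_encoder_error_general (hcR : 0 ≤ cR) (hcT0 : 0 ≤ cT) (hcT1 : cT < 1)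
    (hsum : ∀ s t, Summable fun n : ℕ ↦ cT ^ n * |r (f^[n] s) - r (f^[n] t)|)
    (dφ : S → S → ℝ) (hφ : ∀ s t, |dφ s t - bisimD fhat rhat cR cT s t| ≤ εφ)
    (hr : ∀ s, |rhat s - r s| ≤ εr) (hP : ∀ s, bisimD f r cR cT (f s) (fhat s) ≤ εP) (s t : S) :
    |bisimD f r cR cT s t - dφ s t| ≤
      εφ + 2 * cR * εr / (1 - cT) + 2 * cT * εP / (1 - cT) := by
  have hmodel := abs_bisimD_sub_bisimD_le hcR hcT0 hcT1 hsum hr hP s t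
  have hencoder := hφ s t
  rw [abs_sub_comm] at hencoder
  linarith [abs_sub_le (bisimD f r cR cT s t) (bisimD fhat rhat cR cT s t) (dφ s t)]

end BisimD

/-- Bound on bisimulation distance with encoder error: with approximate
dynamics `(f̂, r̂)` and encoder `φ` into a normed space, if
`|‖φ s − φ t‖ − d̂(s,t)| ≤ ε_φ`, `|r̂ s − r s| ≤ ε_r`, and `d(f s, f̂ s) ≤ ε_P`, then
`|d(s,t) − ‖φ s − φ t‖| ≤ ε_φ + (2·c_R·ε_r)/(1 − c_T) + (2·c_T·ε_P)/(1 − c_T)`. -/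
theorem bisim_distance_encoder_error
    {S : Type*} [Nonempty S] (f : S → S) (r : S → ℝ)
    (hr : ∃ M, ∀ s, |r s| ≤ M)
    (cR cT : ℝ) (hcR : 0 ≤ cR) (hcT0 : 0 ≤ cT) (hcT1 : cT < 1)
    (fhat : S → S) (rhat : S → ℝ) (hrhat : ∃ M, ∀ s, |rhat s| ≤ M)
    {E : Type*} [NormedAddCommGroup E] [NormedSpace ℝ E] (φ : S → E)
    (εφ εr εP : ℝ) (hεφ : 0 ≤ εφ) (hεr : 0 ≤ εr) (hεP : 0 ≤ εP)
    (hφerr : ∀ s t, |‖φ s - φ t‖ - bisimD fhat rhat cR cT s t| ≤ εφ)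
    (hrerr : ∀ s, |rhat s - r s| ≤ εr)
    (hPerr : ∀ s, bisimD f r cR cT (f s) (fhat s) ≤ εP) :
    ∀ s t : S, |bisimD f r cR cT s t - ‖φ s - φ t‖| ≤
      εφ + 2 * cR * εr / (1 - cT) + 2 * cT * εP / (1 - cT) :=
  bisim_distance_encoder_error_general hcR hcT0 hcT1
    (fun _ _ ↦ summable_pow_mul_abs_sub_of_bounded hcT0 hcT1 hr _ _) _ hφerr hrerr hPerr
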